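/- Let p be an odd prime and let r be odd with 0 < r < p − 1. Then there exists a linear code C ⊆ (Z/pZ)^{p−1} with dim C = r, minimum distance p − r, and C ∩ C^⊥ = {0}; that is, an LCD MDS (p−1, r, p−r) code exists over the prime field GF(p) = Z/pZ. -/

import Mathlib

/-- Hamming weight of a vector: the number of nonzero coordinates. -/
noncomputable def hWeight {F : Type*} [Field F] {n : ℕ} (v : Fin n → F) : ℕ :=
  open scoped Classical in
  (Finset.univ.filter fun m => v m ≠ 0).card

/-- The dual code of `C` with respect to the standard bilinear form. -/
def dualCode {F : Type*} [Field F] {n : ℕ} (C : Submodule F (Fin n → F)) :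
    Submodule F (Fin n → F) where
  carrier := {v | ∀ u ∈ C, ∑ m, u m * v m = 0}
  add_mem' := by
    intro a b ha hb u hu
    have h : ∑ m, u m * (a + b) m = (∑ m, u m * a m) + ∑ m, u m * b m := by
      rw [← Finset.sum_add_distrib]
      exact Finset.sum_congr rfl fun m _ => by simp [mul_add]
    rw [h, ha u hu, hb u hu, add_zero]
  zero_mem' := by intro u hu; simp
  smul_mem' := by
    intro c a ha u hu
    have h : ∑ m, u m * (c • a) m = c * ∑ m, u m * a m := by
      rw [Finset.mul_sum]
      exact Finset.sum_congr rfl fun m _ => by simp [smul_eq_mul]; ring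
    rw [h, ha u hu, mul_zero]

/-- Minimum distance of a code: the least Hamming weight of a nonzero codeword. -/
noncomputable def minDist {F : Type*} [Field F] {n : ℕ} (C : Submodule F (Fin n → F)) : ℕ :=
  sInf {d | ∃ v ∈ C, v ≠ 0 ∧ hWeight v = d}

/-!
Let `ζ` be a primitive `n`-th root of unity and consider the words `(x ^ a * f x)` with `x` running
through the powers of `ζ` and `deg f < r`. Since `f` has fewer than `r` roots, this code has
dimension `r` and attains the Singleton bound, whatever the shift `a` is. The words of the monomials
`X ^ i` and `X ^ j` pair to `∑ x ^ (2 * a + i + j)`, which is `n` or `0` according to whether `n`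
divides `2 * a + i + j`. If `a` is chosen such that `n ∣ 2 * a + (r - 1)`, then this happens exactly
for `i + j = r - 1`: the Gram matrix is `n` times an antidiagonal permutation matrix, hence
invertible, and the code meets its dual trivially.
-/

open Polynomial

section Codes

variable {F : Type*} [Field F] {n : ℕ}

theorem card_filter_eq_zero_add_hWeight [DecidableEq F] (v : Fin n → F) :
    (Finset.univ.filter fun m => v m = 0).card + hWeight v = n := by
  classical
  have h := Finset.card_filter_add_card_filter_not (s := (Finset.univ : Finset (Fin n)))
    (fun m => v m = 0)
  rw [Finset.card_univ, Fintype.card_fin] at h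
  unfold hWeight
  convert h

theorem minDist_le_hWeight {C : Submodule F (Fin n → F)} {v : Fin n → F} (hv : v ∈ C)
    (hv0 : v ≠ 0) : minDist C ≤ hWeight v :=
  Nat.sInf_le ⟨v, hv, hv0, rfl⟩

theorem exists_hWeight_eq_minDist {C : Submodule F (Fin n → F)} (hC : C ≠ ⊥) :
    ∃ v ∈ C, v ≠ 0 ∧ hWeight v = minDist C := by
  obtain ⟨v, hv, hv0⟩ := Submodule.exists_mem_ne_zero_of_ne_bot hC
  exact Nat.sInf_mem (s := {d | ∃ v ∈ C, v ≠ 0 ∧ hWeight v = d}) ⟨_, v, hv, hv0, rfl⟩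

theorem exists_ne_zero_forall_eq_zero_of_card_lt_finrank {C : Submodule F (Fin n → F)}
    {S : Finset (Fin n)} (hS : S.card < Module.finrank F C) :
    ∃ v ∈ C, v ≠ 0 ∧ ∀ m ∈ S, v m = 0 := by
  let restrict : C →ₗ[F] (S → F) := LinearMap.funLeft F F Subtype.val ∘ₗ C.subtype
  have hker : LinearMap.ker restrict ≠ ⊥ :=
    LinearMap.ker_ne_bot_of_finrank_lt (by simpa using hS)
  obtain ⟨v, hv, hv0⟩ := Submodule.exists_mem_ne_zero_of_ne_bot hker
  exact ⟨v, v.2, by simpa using hv0, fun m hm => congrFun (LinearMap.mem_ker.1 hv) ⟨m, hm⟩⟩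

theorem minDist_add_finrank_le {C : Submodule F (Fin n → F)} (hC : C ≠ ⊥) :
    minDist C + Module.finrank F C ≤ n + 1 := by
  classical
  have hpos : 0 < Module.finrank F C := Nat.pos_of_ne_zero (by rwa [Ne, Submodule.finrank_eq_zero])
  have hle : Module.finrank F C ≤ n := by simpa using C.finrank_le
  obtain ⟨S, -, hS⟩ := Finset.exists_subset_card_eq (s := (Finset.univ : Finset (Fin n)))
    (n := Module.finrank F C - 1) (by rw [Finset.card_univ, Fintype.card_fin]; lia)
  obtain ⟨v, hv, hv0, hvS⟩ :=
    exists_ne_zero_forall_eq_zero_of_card_lt_finrank (C := C) (S := S) (by lia)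
  have hzeros : S.card ≤ (Finset.univ.filter fun m => v m = 0).card :=
    Finset.card_le_card fun m hm => by simpa using hvS m hm
  have hweight := card_filter_eq_zero_add_hWeight v
  have hdist := minDist_le_hWeight hv hv0
  lia

end Codes

section GRS

variable {F : Type*} [Field F] {n r : ℕ} {α v : Fin n → F}

/-- The encoding map of generalized Reed–Solomon codes: `f` is sent to its values at the points
`α m`, scaled by the multipliers `v m`. -/
noncomputable def weightedEval (α v : Fin n → F) : F[X] →ₗ[F] (Fin n → F) :=
  LinearMap.pi fun m => v m • leval (α m)

/-- The generalized Reed–Solomon code with evaluation points `α` and multipliers `v`: the image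
of the polynomials of degree less than `r`. -/
noncomputable def grsCode (α v : Fin n → F) (r : ℕ) : Submodule F (Fin n → F) :=
  (degreeLT F r).map (weightedEval α v)

theorem weightedEval_apply (α v : Fin n → F) (f : F[X]) (m : Fin n) :
    weightedEval α v f m = v m * f.eval (α m) :=
  rfl

theorem weightedEval_eq_sum_range (α v : Fin n → F) {f : F[X]} (hf : f.natDegree < r)
    (m : Fin n) :
    weightedEval α v f m = ∑ j ∈ Finset.range r, f.coeff j * weightedEval α v (X ^ j) m := by
  simp only [weightedEval_apply, eval_eq_sum_range' hf, eval_pow, eval_X, Finset.mul_sum,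
    mul_left_comm]

theorem lt_hWeight_weightedEval_add (hα : Function.Injective α) (hv : ∀ m, v m ≠ 0) {f : F[X]}
    (hf : f ∈ degreeLT F r) (hf0 : f ≠ 0) : n < hWeight (weightedEval α v f) + r := by
  classical
  have hweight := card_filter_eq_zero_add_hWeight (weightedEval α v f)
  by_contra! hle
  refine hf0 (eq_zero_of_degree_lt_of_eval_index_eq_zero
    (Finset.univ.filter fun m => weightedEval α v f m = 0) hα.injOn ?_ ?_)
  · exact (mem_degreeLT.1 hf).trans_le (by exact_mod_cast (by lia))
  · intro m hm
    simpa [weightedEval_apply, hv m] using hm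

theorem weightedEval_ne_zero (hα : Function.Injective α) (hv : ∀ m, v m ≠ 0) (hrn : r ≤ n)
    {f : F[X]} (hf : f ∈ degreeLT F r) (hf0 : f ≠ 0) : weightedEval α v f ≠ 0 := by
  intro h
  have hlt := lt_hWeight_weightedEval_add hα hv hf hf0
  simp only [h, hWeight, Pi.zero_apply, ne_eq, not_true_eq_false, Finset.filter_false,
    Finset.card_empty] at hlt
  lia

theorem finrank_grsCode (hα : Function.Injective α) (hv : ∀ m, v m ≠ 0) (hrn : r ≤ n) :
    Module.finrank F (grsCode α v r) = r := by
  have hinj : Function.Injective ((weightedEval α v).domRestrict (degreeLT F r)) := by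
    refine (injective_iff_map_eq_zero _).2 fun f hf => ?_
    by_contra hf0
    exact weightedEval_ne_zero hα hv hrn f.2 (by simpa using hf0) hf
  rw [grsCode, ← LinearMap.range_domRestrict, LinearMap.finrank_range_of_inj hinj,
    (degreeLTEquiv F r).finrank_eq, Module.finrank_fin_fun]

theorem minDist_grsCode (hα : Function.Injective α) (hv : ∀ m, v m ≠ 0) (hr0 : 0 < r)
    (hrn : r ≤ n) : minDist (grsCode α v r) = n - r + 1 := by
  have hfinrank := finrank_grsCode hα hv hrn
  have hne : grsCode α v r ≠ ⊥ := by
    rw [Ne, ← Submodule.finrank_eq_zero (R := F), hfinrank]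
    exact hr0.ne'
  have hupper := minDist_add_finrank_le hne
  obtain ⟨_, ⟨f, hf, rfl⟩, hf0, hmin⟩ := exists_hWeight_eq_minDist hne
  have hlower := lt_hWeight_weightedEval_add hα hv hf fun h => hf0 (by rw [h, map_zero])
  lia

end GRS

section RootsOfUnity

variable {F : Type*} [Field F] {n : ℕ} {ζ : F}

/-- The vector `(1, ζ, …, ζ ^ (n - 1))`, which lists the `n`-th roots of unity when `ζ` is a
primitive one. It provides the evaluation points of the codes below, and its powers provide their
multipliers. -/
def rootPowers (ζ : F) (n : ℕ) : Fin n → F :=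
  fun m => ζ ^ (m : ℕ)

theorem rootPowers_injective (hζ : IsPrimitiveRoot ζ n) : Function.Injective (rootPowers ζ n) :=
  fun i j hij => Fin.ext (hζ.pow_inj i.2 j.2 hij)

theorem rootPowers_pow_ne_zero (hζ : IsPrimitiveRoot ζ n) (a : ℕ) (m : Fin n) :
    (rootPowers ζ n ^ a) m ≠ 0 :=
  pow_ne_zero _ (pow_ne_zero _ (hζ.ne_zero m.pos.ne'))

theorem sum_rootPowers_pow (hζ : IsPrimitiveRoot ζ n) (k : ℕ) :
    ∑ m, rootPowers ζ n m ^ k = if n ∣ k then (n : F) else 0 := by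
  have hgeom : ∑ m, rootPowers ζ n m ^ k = ∑ i ∈ Finset.range n, (ζ ^ k) ^ i := by
    rw [← Fin.sum_univ_eq_sum_range]
    exact Finset.sum_congr rfl fun m _ => pow_right_comm ..
  rw [hgeom]
  split_ifs with hk
  · simp [(hζ.pow_eq_one_iff_dvd k).2 hk]
  · have hne : ζ ^ k - 1 ≠ 0 := sub_ne_zero.2 (mt (hζ.pow_eq_one_iff_dvd k).1 hk)
    refine (mul_eq_zero.1 ?_).resolve_left hne
    rw [mul_geom_sum, pow_right_comm, hζ.pow_eq_one, one_pow, sub_self]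

theorem sum_weightedEval_X_pow_mul_X_pow (hζ : IsPrimitiveRoot ζ n) (a i j : ℕ) :
    ∑ m, weightedEval (rootPowers ζ n) (rootPowers ζ n ^ a) (X ^ i) m *
      weightedEval (rootPowers ζ n) (rootPowers ζ n ^ a) (X ^ j) m =
        if n ∣ 2 * a + (i + j) then (n : F) else 0 := by
  rw [← sum_rootPowers_pow hζ]
  refine Finset.sum_congr rfl fun m _ => ?_
  simp only [weightedEval_apply, Pi.pow_apply, eval_pow, eval_X]
  ring

theorem dvd_two_mul_add_iff_add_eq {a d i j : ℕ} (ha : n ∣ 2 * a + d) (hdn : d < n) (hi : i ≤ d)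
    (hj : j ≤ d) : n ∣ 2 * a + (i + j) ↔ i + j = d := by
  refine ⟨fun h => ?_, fun h => h ▸ ha⟩
  have hdvd : (n : ℤ) ∣ (i + j : ℤ) - d := by
    have hsub := dvd_sub (Int.natCast_dvd_natCast.2 h) (Int.natCast_dvd_natCast.2 ha)
    push_cast at hsub
    simpa using hsub
  have habs : |(i + j : ℤ) - d| < n := by rw [abs_lt]; lia
  have hzero := Int.eq_zero_of_abs_lt_dvd hdvd habs
  lia

theorem sum_weightedEval_X_pow_mul_eq_coeff (hζ : IsPrimitiveRoot ζ n) {a d k : ℕ}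
    (ha : n ∣ 2 * a + d) (hdn : d < n) (hk : k ≤ d) {f : F[X]} (hf : f ∈ degreeLT F (d + 1)) :
    ∑ m, weightedEval (rootPowers ζ n) (rootPowers ζ n ^ a) (X ^ (d - k)) m *
      weightedEval (rootPowers ζ n) (rootPowers ζ n ^ a) f m = n * f.coeff k := by
  set E := weightedEval (rootPowers ζ n) (rootPowers ζ n ^ a)
  have hdeg : f.natDegree < d + 1 :=
    Nat.lt_succ_of_le (natDegree_le_of_degree_le (by
      rwa [degreeLT_succ_eq_degreeLE, mem_degreeLE] at hf))
  calc ∑ m, E (X ^ (d - k)) m * E f m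
      = ∑ j ∈ Finset.range (d + 1), f.coeff j * ∑ m, E (X ^ (d - k)) m * E (X ^ j) m := by
        simp only [E, weightedEval_eq_sum_range _ _ hdeg, Finset.mul_sum]
        rw [Finset.sum_comm]
        exact Finset.sum_congr rfl fun _ _ => Finset.sum_congr rfl fun _ _ => mul_left_comm ..
    _ = ∑ j ∈ Finset.range (d + 1), if j = k then f.coeff j * n else 0 := by
        refine Finset.sum_congr rfl fun j hj => ?_
        have hjd : j ≤ d := Finset.mem_range_succ_iff.1 hj
        have hiff : n ∣ 2 * a + (d - k + j) ↔ j = k := by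
          rw [dvd_two_mul_add_iff_add_eq ha hdn (d.sub_le k) hjd]
          lia
        simp only [E, sum_weightedEval_X_pow_mul_X_pow hζ, hiff, mul_ite, mul_zero]
    _ = n * f.coeff k := by
        rw [Finset.sum_ite_eq', if_pos (Finset.mem_range_succ_iff.2 hk), mul_comm]

theorem grsCode_rootPowers_inf_dualCode (hζ : IsPrimitiveRoot ζ n) {a d : ℕ}
    (ha : n ∣ 2 * a + d) (hdn : d < n) :
    grsCode (rootPowers ζ n) (rootPowers ζ n ^ a) (d + 1) ⊓
      dualCode (grsCode (rootPowers ζ n) (rootPowers ζ n ^ a) (d + 1)) = ⊥ := by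
  have : NeZero n := ⟨(Nat.zero_lt_of_lt hdn).ne'⟩
  have hn : (n : F) ≠ 0 := hζ.neZero'.out
  rw [eq_bot_iff]
  rintro _ ⟨⟨f, hf, rfl⟩, hdual⟩
  suffices f = 0 by rw [this, map_zero, Submodule.mem_bot]
  ext k
  rw [coeff_zero]
  by_cases hk : k ≤ d
  · have hmem : (X ^ (d - k) : F[X]) ∈ degreeLT F (d + 1) := by
      rw [mem_degreeLT, degree_X_pow]
      exact_mod_cast (by lia)
    have horth := hdual _ (Submodule.mem_map_of_mem hmem)
    rw [sum_weightedEval_X_pow_mul_eq_coeff hζ ha hdn hk hf] at horth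
    exact (mul_eq_zero.1 horth).resolve_left hn
  · exact coeff_eq_zero_of_degree_lt ((mem_degreeLT.1 hf).trans_le (by exact_mod_cast (by lia)))

theorem exists_dvd_two_mul_add {d : ℕ} (hn : 0 < n) (h : Even d ∨ Odd n) :
    ∃ a, n ∣ 2 * a + d := by
  rcases h with ⟨s, rfl⟩ | ⟨t, rfl⟩
  · obtain ⟨n, rfl⟩ := Nat.exists_eq_succ_of_ne_zero hn.ne'
    exact ⟨n * s, 2 * s, by rw [Nat.succ_eq_add_one]; ring⟩
  · exact ⟨t * d, d, by ring⟩

theorem exists_isPrimitiveRoot_natCard_sub_one (K : Type*) [Field K] [Finite K] :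
    ∃ ζ : K, IsPrimitiveRoot ζ (Nat.card K - 1) := by
  obtain ⟨u, hu⟩ := IsCyclic.exists_ofOrder_eq_natCard (α := Kˣ)
  rw [Nat.card_units] at hu
  exact ⟨u, hu ▸ IsPrimitiveRoot.coe_units_iff.2 (IsPrimitiveRoot.orderOf u)⟩

theorem exists_LCD_MDS_code_prime_field_general (hζ : IsPrimitiveRoot ζ n) {r : ℕ} (hr0 : 0 < r)
    (hrn : r ≤ n) (hodd : Odd r ∨ Odd n) :
    ∃ C : Submodule F (Fin n → F),
      Module.finrank F C = r ∧ minDist C = n - r + 1 ∧ C ⊓ dualCode C = ⊥ := by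
  obtain ⟨d, rfl⟩ := Nat.exists_eq_add_one_of_ne_zero hr0.ne'
  obtain ⟨a, ha⟩ : ∃ a, n ∣ 2 * a + d := by
    refine exists_dvd_two_mul_add (hr0.trans_le hrn) (hodd.imp_left fun hd => ?_)
    rwa [Nat.odd_add_one, Nat.not_odd_iff_even] at hd
  have hinj := rootPowers_injective hζ
  have hne := rootPowers_pow_ne_zero hζ a
  exact ⟨grsCode (rootPowers ζ n) (rootPowers ζ n ^ a) (d + 1), finrank_grsCode hinj hne hrn,
    minDist_grsCode hinj hne hr0 hrn, grsCode_rootPowers_inf_dualCode hζ ha hrn⟩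

end RootsOfUnity

/-- For an odd prime `p` and odd `r` with `0 < r < p − 1`, there exists
an LCD MDS `(p−1, r, p−r)` code over the prime field `GF(p) = ℤ/pℤ`. -/
theorem exists_LCD_MDS_code_prime_field (p : ℕ) [Fact p.Prime] (hodd : Odd p)
    (r : ℕ) (hr : Odd r) (hr0 : 0 < r) (hrp : r < p - 1) :
    ∃ C : Submodule (ZMod p) (Fin (p - 1) → ZMod p),
      Module.finrank (ZMod p) C = r ∧ minDist C = p - r ∧ C ⊓ dualCode C = ⊥ := by
  obtain ⟨ζ, hζ⟩ := exists_isPrimitiveRoot_natCard_sub_one (ZMod p)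
  rw [Nat.card_zmod] at hζ
  simpa only [show p - 1 - r + 1 = p - r by lia] using
    exists_LCD_MDS_code_prime_field_general hζ hr0 hrp.le (.inl hr)
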